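/- Maximal inequality transfer (commutative model of Theorem 1.2 consequence): Let T₁, T₂ be commuting positive linear contractions of L¹(X,μ) that are also contractions for the L^∞ norm, let x ∈ L¹ with x ≥ 0, and let ε > 0. Then there exists a measurable set E with μ(Eᶜ) ≤ 2ε⁻¹‖x‖₁·(constant) such that for all n, ‖1_E · ( (1/n²) Σ_{k₁<n}Σ_{k₂<n} T₁^{k₁}T₂^{k₂}x ) · 1_E‖_∞ ≤ 2χ₂ε, where χ₂ is the Brunel constant for d = 2. (Follows from the Hopf maximal ergodic theorem applied to the Brunel operator U.) -/

import Mathlib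

/-!
The series `ψ(z) = (1 - √(1 - z)) / z` has nonnegative coefficients with sum `1`, and for `j ≤ √k`
the `k`-th coefficient of `ψ ^ j` is at least a constant times `j / k ^ (3 / 2)`. Hence averaging
`ψ(T₁)ʲ ψ(T₂)ʲ` over `j ≤ √n` gives every `T₁ᵏ T₂ˡ` with `k, l < n` a weight at least a constant
times `n⁻²`: the averages of the single operator `U = ψ(T₁) ψ(T₂)` dominate the square averages of
`T₁` and `T₂`. As a limit of subconvex combinations of products of Dunford–Schwartz operators, `U`
is Dunford–Schwartz, so the maximal ergodic inequality for `U` bounds the measure of the set where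
some average of `U` exceeds a given level, and the complement of that set is the desired `E`.
-/

open Finset MeasureTheory

section Coefficients

theorem coeff_succ_catalanSeries_pow_succ (k j : ℕ) :
    PowerSeries.coeff (k + 1) (PowerSeries.catalanSeries ^ (j + 1)) =
      PowerSeries.coeff k (PowerSeries.catalanSeries ^ (j + 2)) +
        PowerSeries.coeff (k + 1) (PowerSeries.catalanSeries ^ j) := by
  have hpow : PowerSeries.catalanSeries ^ (j + 1) =
      PowerSeries.catalanSeries ^ (j + 2) * PowerSeries.X + PowerSeries.catalanSeries ^ j :=
    calc PowerSeries.catalanSeries ^ (j + 1)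
        = PowerSeries.catalanSeries ^ j *
            (PowerSeries.catalanSeries ^ 2 * PowerSeries.X + 1) := by
          rw [PowerSeries.catalanSeries_sq_mul_X_add_one, pow_succ]
      _ = PowerSeries.catalanSeries ^ (j + 2) * PowerSeries.X +
            PowerSeries.catalanSeries ^ j := by ring
  rw [hpow, map_add, PowerSeries.coeff_succ_mul_X]

theorem coeff_catalanSeries_pow (k j : ℕ) :
    (2 * k + j) * PowerSeries.coeff k (PowerSeries.catalanSeries ^ j) =
      j * (2 * k + j).choose k := by
  induction k generalizing j with
  | zero => simp
  | succ k ihk =>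
    induction j with
    | zero => simp
    | succ j ihj =>
      set N := 2 * k + j + 2 with hN
      have hk : N * PowerSeries.coeff k (PowerSeries.catalanSeries ^ (j + 2)) =
          (j + 2) * N.choose k := ihk (j + 2)
      have hj : N * PowerSeries.coeff (k + 1) (PowerSeries.catalanSeries ^ j) =
          j * N.choose (k + 1) := by
        rwa [show 2 * (k + 1) + j = N by ring] at ihj
      have hsucc : N.choose (k + 1) * (k + 1) = N.choose k * (k + j + 2) := by
        rw [Nat.choose_succ_right_eq, show N - k = k + j + 2 by lia]
      have hpascal : (N + 1).choose (k + 1) = N.choose k + N.choose (k + 1) :=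
        Nat.choose_succ_succ N k
      rw [show 2 * (k + 1) + (j + 1) = N + 1 by ring, coeff_succ_catalanSeries_pow_succ,
        hpascal]
      refine Nat.eq_of_mul_eq_mul_left (show 0 < N by lia) ?_
      zify at hk hj hsucc hN ⊢
      linear_combination (N + 1 : ℤ) * (hk + hj) - 2 * hsucc +
        (N.choose k - N.choose (k + 1) : ℤ) * hN

theorem sixteen_pow_le_centralBinom_sq_mul (k : ℕ) :
    16 ^ k ≤ k.centralBinom ^ 2 * (4 * k + 1) := by
  induction k with
  | zero => simp
  | succ k ih =>
    have hpoly : 4 * (k + 1) ^ 2 * (4 * k + 1) ≤ (2 * k + 1) ^ 2 * (4 * k + 5) := by nlinarith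
    refine Nat.le_of_mul_le_mul_left ?_ (show 0 < (k + 1) ^ 2 by positivity)
    calc (k + 1) ^ 2 * 16 ^ (k + 1)
        = 16 * (k + 1) ^ 2 * 16 ^ k := by ring
      _ ≤ 16 * (k + 1) ^ 2 * (k.centralBinom ^ 2 * (4 * k + 1)) := by gcongr
      _ = 4 * k.centralBinom ^ 2 * (4 * (k + 1) ^ 2 * (4 * k + 1)) := by ring
      _ ≤ 4 * k.centralBinom ^ 2 * ((2 * k + 1) ^ 2 * (4 * k + 5)) := by gcongr
      _ = (2 * (2 * k + 1) * k.centralBinom) ^ 2 * (4 * k + 5) := by ring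
      _ = (k + 1) ^ 2 * ((k + 1).centralBinom ^ 2 * (4 * (k + 1) + 1)) := by
        rw [← Nat.succ_mul_centralBinom_succ]; ring

theorem four_pow_le_centralBinom_mul_sqrt (k : ℕ) :
    (4 : ℝ) ^ k ≤ k.centralBinom * (2 * √(k + 1)) := by
  refine le_of_sq_le_sq ?_ (by positivity)
  calc ((4 : ℝ) ^ k) ^ 2 = 16 ^ k := by rw [← pow_mul, mul_comm, pow_mul]; norm_num
    _ ≤ (k.centralBinom : ℝ) ^ 2 * (4 * k + 1) := by
      exact_mod_cast sixteen_pow_le_centralBinom_sq_mul k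
    _ ≤ (k.centralBinom : ℝ) ^ 2 * (4 * (k + 1)) := by gcongr; linarith
    _ = (k.centralBinom * (2 * √(k + 1))) ^ 2 := by
      rw [mul_pow, mul_pow, Real.sq_sqrt (by positivity)]; norm_num

-- `(2 * k + j).choose k` is `k.centralBinom * 2 ^ j` times the product of `1 - i / (2 * (k + i))`
-- over `1 ≤ i ≤ j`, and each factor is at least `1 - i / (2 * (k + 1))`.
theorem centralBinom_mul_two_pow_mul_le_choose (k j : ℕ) :
    k.centralBinom * 2 ^ j * (1 - j * (j + 1) / (4 * (k + 1)) : ℝ) ≤ (2 * k + j).choose k := by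
  induction j with
  | zero => simp [Nat.centralBinom]
  | succ j ih =>
    have hstep : ((2 * k + (j + 1)).choose k : ℝ) * (k + j + 1) =
        (2 * k + j).choose k * (2 * k + j + 1) := by
      have h := Nat.choose_mul_succ_eq (2 * k + j) k
      rw [show 2 * k + j + 1 - k = k + j + 1 by lia] at h
      exact_mod_cast h.symm
    have hfactor : 2 * (1 - (j + 1) * (j + 1 + 1) / (4 * (k + 1)) : ℝ) * (k + j + 1) ≤
        (1 - j * (j + 1) / (4 * (k + 1))) * (2 * k + j + 1) := by
      have hgap : (1 - j * (j + 1) / (4 * (k + 1))) * (2 * k + j + 1) -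
          2 * (1 - (j + 1) * (j + 1 + 1) / (4 * (k + 1))) * (k + j + 1) =
            ((j + 1) * j * (j + 5) / (4 * (k + 1)) : ℝ) := by
        field_simp; ring
      rw [← sub_nonneg, hgap]
      positivity
    push_cast
    refine le_of_mul_le_mul_right ?_ (show (0 : ℝ) < k + j + 1 by positivity)
    calc k.centralBinom * 2 ^ (j + 1) * (1 - (j + 1) * (j + 1 + 1) / (4 * (k + 1)) : ℝ) *
          (k + j + 1)
        = k.centralBinom * 2 ^ j *
            (2 * (1 - (j + 1) * (j + 1 + 1) / (4 * (k + 1)) : ℝ) * (k + j + 1)) := by ring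
      _ ≤ k.centralBinom * 2 ^ j *
            ((1 - j * (j + 1) / (4 * (k + 1)) : ℝ) * (2 * k + j + 1)) := by gcongr
      _ = k.centralBinom * 2 ^ j * (1 - j * (j + 1) / (4 * (k + 1)) : ℝ) *
            (2 * k + j + 1) := by ring
      _ ≤ (2 * k + j).choose k * (2 * k + j + 1) := by gcongr
      _ = (2 * k + (j + 1)).choose k * (k + j + 1) := hstep.symm

theorem two_pow_le_choose_mul_sqrt {k j : ℕ} (hj : j ^ 2 ≤ k + 1) :
    (2 : ℝ) ^ (2 * k + j) ≤ (2 * k + j).choose k * (4 * √(k + 1)) := by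
  have hhalf : (1 / 2 : ℝ) ≤ 1 - j * (j + 1) / (4 * (k + 1)) := by
    have hj_sq : (j : ℝ) ^ 2 ≤ k + 1 := by exact_mod_cast hj
    have hj_le : (j : ℝ) ≤ j ^ 2 := by exact_mod_cast Nat.le_self_pow two_ne_zero j
    have : (j * (j + 1) / (4 * (k + 1)) : ℝ) ≤ 1 / 2 := by
      rw [div_le_iff₀ (by positivity)]; linarith
    linarith
  calc (2 : ℝ) ^ (2 * k + j) = 4 ^ k * 2 ^ j := by rw [pow_add, pow_mul]; norm_num
    _ ≤ k.centralBinom * (2 * √(k + 1)) * 2 ^ j := by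
      gcongr; exact four_pow_le_centralBinom_mul_sqrt k
    _ = k.centralBinom * 2 ^ j * (1 / 2) * (4 * √(k + 1)) := by ring
    _ ≤ k.centralBinom * 2 ^ j * (1 - j * (j + 1) / (4 * (k + 1))) * (4 * √(k + 1)) := by gcongr
    _ ≤ (2 * k + j).choose k * (4 * √(k + 1)) := by
      gcongr; exact centralBinom_mul_two_pow_mul_le_choose k j

/-- Brunel's power series `ψ(z) = (1 - √(1 - z)) / z`, written through the Catalan generating
function `C` as `ψ(z) = C(z / 4) / 2`. -/
noncomputable def brunelSeries : PowerSeries ℝ :=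
  PowerSeries.C 2⁻¹ *
    PowerSeries.rescale 4⁻¹ (PowerSeries.map (Nat.castRingHom ℝ) PowerSeries.catalanSeries)

theorem coeff_brunelSeries_pow (k j : ℕ) :
    PowerSeries.coeff k (brunelSeries ^ j) =
      PowerSeries.coeff k (PowerSeries.catalanSeries ^ j) / 2 ^ (2 * k + j) := by
  rw [brunelSeries, mul_pow, ← map_pow, ← map_pow, ← map_pow, PowerSeries.coeff_C_mul,
    PowerSeries.coeff_rescale, PowerSeries.coeff_map,
    show (2 : ℝ) ^ (2 * k + j) = 4 ^ k * 2 ^ j by rw [pow_add, pow_mul]; norm_num,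
    inv_pow, inv_pow, eq_natCast]
  field_simp

theorem coeff_brunelSeries_pow_nonneg (k j : ℕ) :
    0 ≤ PowerSeries.coeff k (brunelSeries ^ j) := by
  rw [coeff_brunelSeries_pow]
  positivity

theorem coeff_brunelSeries (k : ℕ) :
    PowerSeries.coeff k brunelSeries = catalan k / (2 * 4 ^ k) := by
  have hpow := coeff_brunelSeries_pow k 1
  rw [pow_one, pow_one, PowerSeries.catalanSeries_coeff] at hpow
  rw [hpow, pow_succ', pow_mul, show (2 : ℝ) ^ 2 = 4 by norm_num]

theorem coeff_brunelSeries_nonneg (k : ℕ) : 0 ≤ PowerSeries.coeff k brunelSeries := by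
  simpa using coeff_brunelSeries_pow_nonneg k 1

theorem sum_range_coeff_brunelSeries (n : ℕ) :
    ∑ k ∈ range n, PowerSeries.coeff k brunelSeries = 1 - n.centralBinom / 4 ^ n := by
  induction n with
  | zero => simp
  | succ n ih =>
    have hcatalan : (n.centralBinom : ℝ) = (n + 1) * catalan n := by
      exact_mod_cast (succ_mul_catalan_eq_centralBinom n).symm
    have hsucc : ((n + 1).centralBinom : ℝ) = 2 * (2 * n + 1) * catalan n := by
      have h : ((n + 1) * (n + 1).centralBinom : ℝ) = 2 * (2 * n + 1) * n.centralBinom := by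
        exact_mod_cast Nat.succ_mul_centralBinom_succ n
      refine mul_left_cancel₀ (show (n + 1 : ℝ) ≠ 0 by positivity) ?_
      rw [h, hcatalan]; ring
    rw [sum_range_succ, ih, coeff_brunelSeries, hsucc, hcatalan, pow_succ]
    field_simp
    ring

theorem sum_range_coeff_brunelSeries_le_one (n : ℕ) :
    ∑ k ∈ range n, PowerSeries.coeff k brunelSeries ≤ 1 := by
  rw [sum_range_coeff_brunelSeries, sub_le_self_iff]
  positivity

theorem summable_norm_coeff_brunelSeries :
    Summable fun k => ‖PowerSeries.coeff k brunelSeries‖ := by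
  simp only [Real.norm_of_nonneg (coeff_brunelSeries_nonneg _)]
  exact summable_of_sum_range_le coeff_brunelSeries_nonneg sum_range_coeff_brunelSeries_le_one

theorem div_le_coeff_brunelSeries_pow {k j : ℕ} (hj : j ^ 2 ≤ k + 1) :
    (j : ℝ) / (12 * √(k + 1) ^ 3) ≤ PowerSeries.coeff k (brunelSeries ^ j) := by
  rcases j.eq_zero_or_pos with rfl | hj_pos
  · simpa using coeff_brunelSeries_pow_nonneg k 0
  have hformula : ((PowerSeries.coeff k (PowerSeries.catalanSeries ^ j) : ℕ) : ℝ) =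
      j * (2 * k + j).choose k / (2 * k + j) := by
    rw [eq_div_iff (by positivity), mul_comm]
    exact_mod_cast coeff_catalanSeries_pow k j
  have hden : (2 * k + j : ℝ) ≤ 3 * √(k + 1) ^ 2 := by
    have hj_le : (j : ℝ) ≤ k + 1 := by exact_mod_cast (Nat.le_self_pow two_ne_zero j).trans hj
    rw [Real.sq_sqrt (by positivity)]; linarith
  rw [coeff_brunelSeries_pow, hformula, div_div, div_le_div_iff₀ (by positivity) (by positivity)]
  calc (j : ℝ) * ((2 * k + j) * 2 ^ (2 * k + j))
      ≤ j * (3 * √(k + 1) ^ 2 * ((2 * k + j).choose k * (4 * √(k + 1)))) := by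
        gcongr; exact two_pow_le_choose_mul_sqrt hj
    _ = j * (2 * k + j).choose k * (12 * √(k + 1) ^ 3) := by ring

theorem pow_three_div_three_le_sum_sq (n : ℕ) :
    (n : ℝ) ^ 3 / 3 ≤ ∑ j ∈ range (n + 1), (j : ℝ) ^ 2 := by
  induction n with
  | zero => simp
  | succ n ih =>
    rw [sum_range_succ]
    push_cast
    nlinarith [(Nat.cast_nonneg n : (0 : ℝ) ≤ n)]

theorem sqrt_le_two_mul_nat_sqrt (n : ℕ) : √(n : ℝ) ≤ 2 * Nat.sqrt n := by
  rcases n.eq_zero_or_pos with rfl | hn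
  · simp
  have hone : (1 : ℝ) ≤ Nat.sqrt n := by exact_mod_cast Nat.sqrt_pos.mpr hn
  linarith [Real.real_sqrt_le_nat_sqrt_succ (a := n)]

theorem inv_sqrt_pow_three_le_sum_coeff_brunelSeries {k₁ k₂ r : ℕ} (h : k₁ ≤ k₂)
    (hr : Nat.sqrt (k₁ + 1) ≤ r) :
    (3456 * √(k₂ + 1) ^ 3)⁻¹ ≤ ∑ j ∈ range (r + 1),
      PowerSeries.coeff k₁ (brunelSeries ^ j) * PowerSeries.coeff k₂ (brunelSeries ^ j) := by
  set q := Nat.sqrt (k₁ + 1)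
  set s := √(k₁ + 1 : ℝ)
  set t := √(k₂ + 1 : ℝ)
  have hs_pos : 0 < s := by positivity
  have ht_pos : 0 < t := by positivity
  have hsq : s / 2 ≤ q := by
    have hsqrt := sqrt_le_two_mul_nat_sqrt (k₁ + 1)
    rw [Nat.cast_succ] at hsqrt
    linarith
  calc (3456 * t ^ 3)⁻¹ = (s / 2) ^ 3 / 3 * (144 * s ^ 3 * t ^ 3)⁻¹ := by field_simp; norm_num
    _ ≤ (q : ℝ) ^ 3 / 3 * (144 * s ^ 3 * t ^ 3)⁻¹ := by gcongr
    _ ≤ (∑ j ∈ range (q + 1), (j : ℝ) ^ 2) * (144 * s ^ 3 * t ^ 3)⁻¹ := by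
      gcongr; exact pow_three_div_three_le_sum_sq q
    _ = ∑ j ∈ range (q + 1), (j / (12 * s ^ 3)) * (j / (12 * t ^ 3)) := by
      rw [sum_mul]
      refine sum_congr rfl fun j _ => ?_
      field_simp
      norm_num
    _ ≤ ∑ j ∈ range (q + 1),
          PowerSeries.coeff k₁ (brunelSeries ^ j) * PowerSeries.coeff k₂ (brunelSeries ^ j) := by
      refine sum_le_sum fun j hj => ?_
      have hj_sq : j ^ 2 ≤ k₁ + 1 :=
        (Nat.pow_le_pow_left (mem_range_succ_iff.mp hj) 2).trans (Nat.sqrt_le' _)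
      gcongr
      · exact coeff_brunelSeries_pow_nonneg k₁ j
      · exact div_le_coeff_brunelSeries_pow hj_sq
      · exact div_le_coeff_brunelSeries_pow (by lia)
    _ ≤ ∑ j ∈ range (r + 1),
          PowerSeries.coeff k₁ (brunelSeries ^ j) * PowerSeries.coeff k₂ (brunelSeries ^ j) := by
      refine sum_le_sum_of_subset_of_nonneg (range_subset_range.mpr (by lia)) fun j _ _ => ?_
      exact mul_nonneg (coeff_brunelSeries_pow_nonneg k₁ j) (coeff_brunelSeries_pow_nonneg k₂ j)

/-- The constant `χ₂` of Brunel's inequality for two operators. The value is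
`2 * 12 ^ 2 * 2 ^ 3 * 3`: the number `√n + 1` of averaged powers is at most `2 * √n`, each of the
two coefficient bounds costs `12`, and `∑ j ^ 2 ≥ q ^ 3 / 3` with `q ≥ √(k + 1) / 2`. -/
def brunelConst : ℝ := 6912

theorem brunelConst_pos : 0 < brunelConst := by norm_num [brunelConst]

theorem inv_sq_le_average_coeff_brunelSeries {n k₁ k₂ : ℕ} (h₁ : k₁ < n) (h₂ : k₂ < n) :
    ((n : ℝ) ^ 2)⁻¹ ≤ brunelConst * (((Nat.sqrt n + 1 : ℕ) : ℝ)⁻¹ *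
      ∑ j ∈ range (Nat.sqrt n + 1),
        PowerSeries.coeff k₁ (brunelSeries ^ j) * PowerSeries.coeff k₂ (brunelSeries ^ j)) := by
  wlog h : k₁ ≤ k₂ generalizing k₁ k₂
  · simpa only [mul_comm] using this h₂ h₁ (le_of_not_ge h)
  have hn : (1 : ℝ) ≤ n := by exact_mod_cast Nat.one_le_of_lt h₁
  have hq_one : 1 ≤ √(n : ℝ) := Real.one_le_sqrt.mpr hn
  have hq_sq : √(n : ℝ) ^ 2 = n := Real.sq_sqrt (by positivity)
  have hlength : ((Nat.sqrt n + 1 : ℕ) : ℝ) ≤ 2 * √n := by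
    push_cast
    linarith [Real.nat_sqrt_le_real_sqrt (a := n)]
  have hk₂ : (k₂ + 1 : ℝ) ≤ n := by exact_mod_cast h₂
  have hk₁ : Nat.sqrt (k₁ + 1) ≤ Nat.sqrt n := Nat.sqrt_le_sqrt h₁
  calc ((n : ℝ) ^ 2)⁻¹ = brunelConst * ((2 * √n)⁻¹ * (3456 * √n ^ 3)⁻¹) := by
        nth_rw 1 [← hq_sq]
        rw [brunelConst]
        field_simp
        norm_num
    _ ≤ brunelConst * (((Nat.sqrt n + 1 : ℕ) : ℝ)⁻¹ * (3456 * √(k₂ + 1) ^ 3)⁻¹) := by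
      have := brunelConst_pos
      gcongr
    _ ≤ _ := by
      have := brunelConst_pos
      gcongr
      exact inv_sqrt_pow_three_le_sum_coeff_brunelSeries h hk₁

end Coefficients

section SeriesEval

variable {𝕜 A : Type*} [NormedField 𝕜] [NormedRing A] [NormedAlgebra 𝕜 A]

/-- The value `∑ₖ pₖ Tᵏ` of the power series `p` at an element `T` of a normed algebra; it is
meaningful when the terms are absolutely summable. -/
noncomputable def seriesEval (p : PowerSeries 𝕜) (T : A) : A :=
  ∑' k, PowerSeries.coeff k p • T ^ k

variable {p q : PowerSeries 𝕜} {S T : A}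

theorem summable_norm_coeff_mul (hp : Summable fun k => ‖PowerSeries.coeff k p‖)
    (hq : Summable fun k => ‖PowerSeries.coeff k q‖) :
    Summable fun k => ‖PowerSeries.coeff k (p * q)‖ := by
  simp only [PowerSeries.coeff_mul]
  exact summable_norm_sum_mul_antidiagonal_of_summable_norm
    (f := fun k => PowerSeries.coeff k p) (g := fun k => PowerSeries.coeff k q) hp hq

theorem summable_norm_coeff_pow (hp : Summable fun k => ‖PowerSeries.coeff k p‖) (j : ℕ) :
    Summable fun k => ‖PowerSeries.coeff k (p ^ j)‖ := by
  induction j with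
  | zero =>
    refine summable_of_ne_finset_zero (s := {0}) fun k hk => ?_
    rw [pow_zero, PowerSeries.coeff_one, if_neg (by simpa using hk), norm_zero]
  | succ j ih =>
    rw [pow_succ]
    exact summable_norm_coeff_mul ih hp

theorem summable_norm_coeff_smul_pow (hp : Summable fun k => ‖PowerSeries.coeff k p‖)
    (hT : ∀ k, ‖T ^ k‖ ≤ 1) : Summable fun k => ‖PowerSeries.coeff k p • T ^ k‖ :=
  hp.of_nonneg_of_le (fun _ => norm_nonneg _) fun k =>
    (norm_smul_le _ _).trans (mul_le_of_le_one_right (norm_nonneg _) (hT k))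

theorem seriesEval_one : seriesEval (1 : PowerSeries 𝕜) T = 1 := by
  rw [seriesEval, tsum_eq_single 0 fun k hk => by
    rw [PowerSeries.coeff_one, if_neg hk, zero_smul]]
  simp

theorem commute_seriesEval (h : Commute S T) :
    Commute (seriesEval p S) (seriesEval q T) :=
  Commute.tsum_left _ fun k => Commute.tsum_right _ fun l =>
    ((h.pow_pow k l).smul_left _).smul_right _

variable [CompleteSpace A]

theorem hasSum_seriesEval (hp : Summable fun k => ‖PowerSeries.coeff k p‖)
    (hT : ∀ k, ‖T ^ k‖ ≤ 1) :
    HasSum (fun k => PowerSeries.coeff k p • T ^ k) (seriesEval p T) :=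
  (summable_norm_coeff_smul_pow hp hT).of_norm.hasSum

theorem seriesEval_mul (hp : Summable fun k => ‖PowerSeries.coeff k p‖)
    (hq : Summable fun k => ‖PowerSeries.coeff k q‖) (hT : ∀ k, ‖T ^ k‖ ≤ 1) :
    seriesEval (p * q) T = seriesEval p T * seriesEval q T := by
  rw [seriesEval, seriesEval, seriesEval, tsum_mul_tsum_eq_tsum_sum_antidiagonal_of_summable_norm
    (summable_norm_coeff_smul_pow hp hT) (summable_norm_coeff_smul_pow hq hT)]
  refine tsum_congr fun k => ?_
  rw [PowerSeries.coeff_mul, sum_smul]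
  refine sum_congr rfl fun i hi => ?_
  rw [smul_mul_smul_comm, ← pow_add, mem_antidiagonal.mp hi]

theorem seriesEval_pow (hp : Summable fun k => ‖PowerSeries.coeff k p‖)
    (hT : ∀ k, ‖T ^ k‖ ≤ 1) (j : ℕ) : seriesEval (p ^ j) T = seriesEval p T ^ j := by
  induction j with
  | zero => rw [pow_zero, pow_zero, seriesEval_one]
  | succ j ih => rw [pow_succ, pow_succ, seriesEval_mul (summable_norm_coeff_pow hp j) hp hT, ih]

end SeriesEval

section BrunelInequality

variable {E : Type*} [NormedAddCommGroup E] [NormedSpace ℝ E]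

/-- The average `n⁻² ∑ T₁ᵏ T₂ˡ x` over the square `0 ≤ k, l < n`. -/
noncomputable def squareAverage (T₁ T₂ : E →L[ℝ] E) (n : ℕ) (x : E) : E :=
  ((n : ℝ) ^ 2)⁻¹ • ∑ k ∈ range n ×ˢ range n, ((T₁ ^ k.1) * (T₂ ^ k.2)) x

/-- The Brunel operator `ψ(T₁) ψ(T₂) = ∑ a(k, l) T₁ᵏ T₂ˡ`, with `ψ` the series `brunelSeries`. -/
noncomputable def brunelOperator (T₁ T₂ : E →L[ℝ] E) : E →L[ℝ] E :=
  seriesEval brunelSeries T₁ * seriesEval brunelSeries T₂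

theorem norm_pow_le_one_of_norm_le_one {T : E →L[ℝ] E} (hT : ‖T‖ ≤ 1) (k : ℕ) : ‖T ^ k‖ ≤ 1 := by
  induction k with
  | zero => exact ContinuousLinearMap.norm_id_le
  | succ k ih =>
    rw [pow_succ]
    exact (norm_mul_le _ _).trans (mul_le_one₀ ih (norm_nonneg _) hT)

theorem pow_apply_nonneg [Preorder E] {T : E →L[ℝ] E} (hmono : Monotone T) {x : E} (hx : 0 ≤ x)
    (k : ℕ) : 0 ≤ (T ^ k) x := by
  rw [FunLike.coe_pow_eq_iterate]
  simpa only [map_zero, Function.iterate_fixed] using hmono.iterate k hx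

theorem squareAverage_nonneg [PartialOrder E] [IsOrderedAddMonoid E] [PosSMulMono ℝ E]
    {T₁ T₂ : E →L[ℝ] E} (hmono₁ : Monotone T₁) (hmono₂ : Monotone T₂) {x : E} (hx : 0 ≤ x)
    (n : ℕ) : 0 ≤ squareAverage T₁ T₂ n x :=
  smul_nonneg (by positivity) <| sum_nonneg fun k _ =>
    pow_apply_nonneg hmono₁ (pow_apply_nonneg hmono₂ hx k.2) k.1

variable [CompleteSpace E]

theorem hasSum_seriesEval_apply {p : PowerSeries ℝ}
    (hp : Summable fun k => ‖PowerSeries.coeff k p‖) {T : E →L[ℝ] E} (hT : ‖T‖ ≤ 1) (x : E) :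
    HasSum (fun k => PowerSeries.coeff k p • (T ^ k) x) (seriesEval p T x) :=
  (hasSum_seriesEval hp (norm_pow_le_one_of_norm_le_one hT)).mapL
    (ContinuousLinearMap.apply ℝ E x)

theorem brunelOperator_pow {T₁ T₂ : E →L[ℝ] E} (hcomm : Commute T₁ T₂) (h₁ : ‖T₁‖ ≤ 1)
    (h₂ : ‖T₂‖ ≤ 1) (j : ℕ) :
    brunelOperator T₁ T₂ ^ j =
      seriesEval (brunelSeries ^ j) T₁ * seriesEval (brunelSeries ^ j) T₂ := by
  rw [brunelOperator, (commute_seriesEval hcomm).mul_pow,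
    seriesEval_pow summable_norm_coeff_brunelSeries (norm_pow_le_one_of_norm_le_one h₁),
    seriesEval_pow summable_norm_coeff_brunelSeries (norm_pow_le_one_of_norm_le_one h₂)]

variable [PartialOrder E] [IsOrderedAddMonoid E] [PosSMulMono ℝ E] [OrderClosedTopology E]

theorem sum_coeff_smul_pow_le_seriesEval {p : PowerSeries ℝ}
    (hp_nonneg : ∀ k, 0 ≤ PowerSeries.coeff k p)
    (hp : Summable fun k => ‖PowerSeries.coeff k p‖) {T : E →L[ℝ] E} (hT : ‖T‖ ≤ 1)
    (hmono : Monotone T) {x : E} (hx : 0 ≤ x) (s : Finset ℕ) :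
    ∑ k ∈ s, PowerSeries.coeff k p • (T ^ k) x ≤ seriesEval p T x :=
  sum_le_hasSum s (fun k _ => smul_nonneg (hp_nonneg k) (pow_apply_nonneg hmono hx k))
    (hasSum_seriesEval_apply hp hT x)

theorem monotone_seriesEval {p : PowerSeries ℝ}
    (hp_nonneg : ∀ k, 0 ≤ PowerSeries.coeff k p)
    (hp : Summable fun k => ‖PowerSeries.coeff k p‖) {T : E →L[ℝ] E} (hT : ‖T‖ ≤ 1)
    (hmono : Monotone T) : Monotone ⇑(seriesEval p T) :=
  (monotone_iff_map_nonneg _).mpr fun x hx => by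
    simpa using sum_coeff_smul_pow_le_seriesEval hp_nonneg hp hT hmono hx ∅

variable {T₁ T₂ : E →L[ℝ] E} {x : E}

theorem sum_coeff_smul_le_brunelOperator_pow (hcomm : Commute T₁ T₂) (h₁ : ‖T₁‖ ≤ 1)
    (h₂ : ‖T₂‖ ≤ 1) (hmono₁ : Monotone T₁) (hmono₂ : Monotone T₂) (hx : 0 ≤ x)
    (s₁ s₂ : Finset ℕ) (j : ℕ) :
    ∑ k ∈ s₁ ×ˢ s₂, (PowerSeries.coeff k.1 (brunelSeries ^ j) *
        PowerSeries.coeff k.2 (brunelSeries ^ j)) • ((T₁ ^ k.1) * (T₂ ^ k.2)) x ≤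
      (brunelOperator T₁ T₂ ^ j) x := by
  have hnonneg (k : ℕ) := coeff_brunelSeries_pow_nonneg k j
  have hsummable := summable_norm_coeff_pow summable_norm_coeff_brunelSeries j
  set y := ∑ k ∈ s₂, PowerSeries.coeff k (brunelSeries ^ j) • (T₂ ^ k) x with hy_def
  have hy_nonneg : 0 ≤ y :=
    sum_nonneg fun k _ => smul_nonneg (hnonneg k) (pow_apply_nonneg hmono₂ hx k)
  calc ∑ k ∈ s₁ ×ˢ s₂, (PowerSeries.coeff k.1 (brunelSeries ^ j) *
          PowerSeries.coeff k.2 (brunelSeries ^ j)) • ((T₁ ^ k.1) * (T₂ ^ k.2)) x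
      = ∑ k ∈ s₁, PowerSeries.coeff k (brunelSeries ^ j) • (T₁ ^ k) y := by
        simp only [sum_product, hy_def, map_sum, map_smul, smul_sum, mul_smul,
          mul_apply_eq_comp]
    _ ≤ seriesEval (brunelSeries ^ j) T₁ y :=
      sum_coeff_smul_pow_le_seriesEval hnonneg hsummable h₁ hmono₁ hy_nonneg s₁
    _ ≤ seriesEval (brunelSeries ^ j) T₁ (seriesEval (brunelSeries ^ j) T₂ x) :=
      monotone_seriesEval hnonneg hsummable h₁ hmono₁
        (sum_coeff_smul_pow_le_seriesEval hnonneg hsummable h₂ hmono₂ hx s₂)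
    _ = (brunelOperator T₁ T₂ ^ j) x := by
      rw [brunelOperator_pow hcomm h₁ h₂, mul_apply_eq_comp]

theorem squareAverage_le_smul_birkhoffAverage_brunelOperator (hcomm : Commute T₁ T₂)
    (h₁ : ‖T₁‖ ≤ 1) (h₂ : ‖T₂‖ ≤ 1) (hmono₁ : Monotone T₁) (hmono₂ : Monotone T₂) (hx : 0 ≤ x)
    (n : ℕ) :
    squareAverage T₁ T₂ n x ≤
      brunelConst • birkhoffAverage ℝ (brunelOperator T₁ T₂) id (Nat.sqrt n + 1) x := by
  set m := Nat.sqrt n + 1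
  set a : ℕ → ℕ × ℕ → ℝ := fun j k => PowerSeries.coeff k.1 (brunelSeries ^ j) *
    PowerSeries.coeff k.2 (brunelSeries ^ j)
  have horbit_nonneg (k : ℕ × ℕ) : 0 ≤ ((T₁ ^ k.1) * (T₂ ^ k.2)) x :=
    pow_apply_nonneg hmono₁ (pow_apply_nonneg hmono₂ hx k.2) k.1
  calc squareAverage T₁ T₂ n x
      = ∑ k ∈ range n ×ˢ range n, ((n : ℝ) ^ 2)⁻¹ • ((T₁ ^ k.1) * (T₂ ^ k.2)) x := by
        rw [squareAverage, smul_sum]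
    _ ≤ ∑ k ∈ range n ×ˢ range n, (brunelConst * ((m : ℝ)⁻¹ * ∑ j ∈ range m, a j k)) •
          ((T₁ ^ k.1) * (T₂ ^ k.2)) x := by
      refine sum_le_sum fun k hk => smul_le_smul_of_nonneg_right ?_ (horbit_nonneg k)
      rw [mem_product, mem_range, mem_range] at hk
      exact inv_sq_le_average_coeff_brunelSeries hk.1 hk.2
    _ = brunelConst • (m : ℝ)⁻¹ • ∑ j ∈ range m, ∑ k ∈ range n ×ˢ range n,
          a j k • ((T₁ ^ k.1) * (T₂ ^ k.2)) x := by
      rw [sum_comm]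
      simp only [smul_sum, mul_smul, sum_smul]
    _ ≤ brunelConst • (m : ℝ)⁻¹ • ∑ j ∈ range m, (brunelOperator T₁ T₂ ^ j) x := by
      have := brunelConst_pos
      gcongr with j
      exact sum_coeff_smul_le_brunelOperator_pow hcomm h₁ h₂ hmono₁ hmono₂ hx _ _ j
    _ = brunelConst • birkhoffAverage ℝ (brunelOperator T₁ T₂) id m x := by
      simp only [birkhoffAverage, birkhoffSum, id, FunLike.coe_pow_eq_iterate]

end BrunelInequality

section ConvexCombinations

theorem sum_smul_mem_of_convex {ι E : Type*} [AddCommGroup E] [Module ℝ E] {C : Set E}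
    (hC : Convex ℝ C) (hzero : 0 ∈ C) {s : Finset ι} {w : ι → ℝ} {v : ι → E}
    (hw : ∀ i ∈ s, 0 ≤ w i) (hw_sum : ∑ i ∈ s, w i ≤ 1) (hv : ∀ i ∈ s, v i ∈ C) :
    ∑ i ∈ s, w i • v i ∈ C := by
  rcases (sum_nonneg hw).eq_or_lt with hsum | hsum
  · have hw_zero := (sum_eq_zero_iff_of_nonneg hw).mp hsum.symm
    rwa [sum_eq_zero fun i hi => by rw [hw_zero i hi, zero_smul]]
  · have hcenter := hC.smul_mem_of_zero_mem hzero (hC.centerMass_mem hw hsum hv)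
      ⟨hsum.le, hw_sum⟩
    rwa [centerMass, smul_inv_smul₀ hsum.ne'] at hcenter

theorem mem_of_hasSum_smul_of_convex {E : Type*} [AddCommGroup E] [Module ℝ E]
    [TopologicalSpace E] {C : Set E} (hC : Convex ℝ C) (hclosed : IsClosed C) (hzero : 0 ∈ C)
    {w : ℕ → ℝ} {v : ℕ → E} {y : E} (hw : ∀ k, 0 ≤ w k)
    (hw_sum : ∀ n, ∑ k ∈ range n, w k ≤ 1) (hv : ∀ k, v k ∈ C)
    (hy : HasSum (fun k => w k • v k) y) : y ∈ C :=
  hclosed.mem_of_tendsto hy.tendsto_sum_nat <| .of_forall fun n =>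
    sum_smul_mem_of_convex hC hzero (fun k _ => hw k) (hw_sum n) fun k _ => hv k

end ConvexCombinations

section DunfordSchwartz

open scoped ENNReal

variable {X : Type*} [MeasurableSpace X] {μ : Measure X}

instance instPosSMulMonoLp {E : Type*} [NormedAddCommGroup E] [NormedSpace ℝ E] [PartialOrder E]
    [PosSMulMono ℝ E] {p : ℝ≥0∞} : PosSMulMono ℝ (Lp E p μ) where
  smul_le_smul_of_nonneg_left c hc f g hfg := by
    rw [← Lp.coeFn_le] at hfg ⊢
    filter_upwards [hfg, Lp.coeFn_smul c f, Lp.coeFn_smul c g] with x hx hf hg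
    rw [hf, hg]
    exact smul_le_smul_of_nonneg_left hx hc

theorem convex_setOf_ae_le {p : ℝ≥0∞} (c : ℝ) :
    Convex ℝ {f : Lp ℝ p μ | ∀ᵐ x ∂μ, f x ≤ c} := by
  intro f hf g hg a b ha hb hab
  filter_upwards [hf, hg, Lp.coeFn_add (a • f) (b • g), Lp.coeFn_smul a f, Lp.coeFn_smul b g]
    with x hfx hgx hadd haf hbg
  rw [hadd, Pi.add_apply, haf, hbg]
  exact convex_Iic c hfx hgx ha hb hab

theorem isClosed_setOf_ae_le {p : ℝ≥0∞} [Fact (1 ≤ p)] (c : ℝ) :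
    IsClosed {f : Lp ℝ p μ | ∀ᵐ x ∂μ, f x ≤ c} := by
  refine IsSeqClosed.isClosed fun f g hf hfg => ?_
  obtain ⟨φ, -, hφ⟩ := (tendstoInMeasure_of_tendsto_Lp hfg).exists_seq_tendsto_ae
  filter_upwards [ae_all_iff.mpr hf, hφ] with x hx hφx
  exact le_of_tendsto' hφx fun n => hx (φ n)

/-- A positive Dunford–Schwartz operator: a positive operator on `L¹` which is a contraction for
both the `L¹` and the `L^∞` norm. The latter is expressed through `0 ≤ f ≤ 1 → T f ≤ 1`. -/
structure IsDunfordSchwartz (T : Lp ℝ 1 μ →L[ℝ] Lp ℝ 1 μ) : Prop where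
  norm_le_one : ‖T‖ ≤ 1
  nonneg : ∀ f : Lp ℝ 1 μ, 0 ≤ f → 0 ≤ T f
  ae_le_one : ∀ f : Lp ℝ 1 μ, 0 ≤ f → (∀ᵐ x ∂μ, f x ≤ 1) → ∀ᵐ x ∂μ, T f x ≤ 1

theorem setOf_isDunfordSchwartz :
    {T : Lp ℝ 1 μ →L[ℝ] Lp ℝ 1 μ | IsDunfordSchwartz T} =
      Metric.closedBall 0 1 ∩
        (⋂ (f : Lp ℝ 1 μ) (_ : 0 ≤ f), (ContinuousLinearMap.apply ℝ (Lp ℝ 1 μ) f) ⁻¹' Set.Ici 0) ∩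
        ⋂ (f : Lp ℝ 1 μ) (_ : 0 ≤ f) (_ : ∀ᵐ x ∂μ, f x ≤ 1),
          (ContinuousLinearMap.apply ℝ (Lp ℝ 1 μ) f) ⁻¹' {g : Lp ℝ 1 μ | ∀ᵐ x ∂μ, g x ≤ 1} := by
  ext T
  simp only [Set.mem_inter_iff, Set.mem_iInter, mem_closedBall_zero_iff]
  exact ⟨fun h => ⟨⟨h.norm_le_one, h.nonneg⟩, h.ae_le_one⟩, fun h => ⟨h.1.1, h.1.2, h.2⟩⟩

theorem convex_setOf_isDunfordSchwartz :
    Convex ℝ {T : Lp ℝ 1 μ →L[ℝ] Lp ℝ 1 μ | IsDunfordSchwartz T} := by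
  rw [setOf_isDunfordSchwartz]
  exact ((convex_closedBall 0 1).inter (convex_iInter₂ fun f _ =>
    (convex_Ici 0).linear_preimage (ContinuousLinearMap.apply ℝ (Lp ℝ 1 μ) f).toLinearMap)).inter
    (convex_iInter₂ fun f _ => convex_iInter fun _ =>
      (convex_setOf_ae_le 1).linear_preimage (ContinuousLinearMap.apply ℝ (Lp ℝ 1 μ) f).toLinearMap)

theorem isClosed_setOf_isDunfordSchwartz :
    IsClosed {T : Lp ℝ 1 μ →L[ℝ] Lp ℝ 1 μ | IsDunfordSchwartz T} := by
  rw [setOf_isDunfordSchwartz]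
  exact (Metric.isClosed_closedBall.inter (isClosed_biInter fun f _ =>
    isClosed_Ici.preimage (ContinuousLinearMap.apply ℝ (Lp ℝ 1 μ) f).continuous)).inter
    (isClosed_biInter fun f _ => isClosed_iInter fun _ =>
      (isClosed_setOf_ae_le 1).preimage (ContinuousLinearMap.apply ℝ (Lp ℝ 1 μ) f).continuous)

namespace IsDunfordSchwartz

variable {S T T₁ T₂ : Lp ℝ 1 μ →L[ℝ] Lp ℝ 1 μ}

protected theorem monotone (hT : IsDunfordSchwartz T) : Monotone T :=
  (monotone_iff_map_nonneg T).mpr hT.nonneg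

protected theorem zero : IsDunfordSchwartz (0 : Lp ℝ 1 μ →L[ℝ] Lp ℝ 1 μ) where
  norm_le_one := by simp
  nonneg _ _ := le_rfl
  ae_le_one _ _ _ := by
    filter_upwards [Lp.coeFn_zero ℝ 1 μ] with x hx
    exact hx.trans_le zero_le_one

protected theorem one : IsDunfordSchwartz (1 : Lp ℝ 1 μ →L[ℝ] Lp ℝ 1 μ) where
  norm_le_one := ContinuousLinearMap.norm_id_le
  nonneg _ hf := hf
  ae_le_one _ _ hf := hf

protected theorem mul (hS : IsDunfordSchwartz S) (hT : IsDunfordSchwartz T) :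
    IsDunfordSchwartz (S * T) where
  norm_le_one := (norm_mul_le S T).trans
    (mul_le_one₀ hS.norm_le_one (norm_nonneg T) hT.norm_le_one)
  nonneg f hf := hS.nonneg _ (hT.nonneg f hf)
  ae_le_one f hf hf_le := hS.ae_le_one _ (hT.nonneg f hf) (hT.ae_le_one f hf hf_le)

protected theorem pow (hT : IsDunfordSchwartz T) (k : ℕ) : IsDunfordSchwartz (T ^ k) := by
  induction k with
  | zero => exact .one
  | succ k ih => exact pow_succ T k ▸ ih.mul hT

protected theorem seriesEval {p : PowerSeries ℝ} (hp_nonneg : ∀ k, 0 ≤ PowerSeries.coeff k p)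
    (hp_sum : ∀ n, ∑ k ∈ range n, PowerSeries.coeff k p ≤ 1) (hT : IsDunfordSchwartz T) :
    IsDunfordSchwartz (seriesEval p T) := by
  have hp : Summable fun k => ‖PowerSeries.coeff k p‖ := by
    simpa only [Real.norm_of_nonneg (hp_nonneg _)] using
      summable_of_sum_range_le hp_nonneg hp_sum
  exact mem_of_hasSum_smul_of_convex convex_setOf_isDunfordSchwartz
    isClosed_setOf_isDunfordSchwartz .zero hp_nonneg hp_sum hT.pow
    (hasSum_seriesEval hp (norm_pow_le_one_of_norm_le_one hT.norm_le_one))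

protected theorem brunelOperator (h₁ : IsDunfordSchwartz T₁) (h₂ : IsDunfordSchwartz T₂) :
    IsDunfordSchwartz (brunelOperator T₁ T₂) :=
  (h₁.seriesEval coeff_brunelSeries_nonneg sum_range_coeff_brunelSeries_le_one).mul
    (h₂.seriesEval coeff_brunelSeries_nonneg sum_range_coeff_brunelSeries_le_one)

theorem birkhoffAverage_ae_le_one (hT : IsDunfordSchwartz T) {f : Lp ℝ 1 μ} (hf : 0 ≤ f)
    (hf_le : ∀ᵐ x ∂μ, f x ≤ 1) (m : ℕ) : ∀ᵐ x ∂μ, birkhoffAverage ℝ T id m f x ≤ 1 := by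
  have haverage : IsDunfordSchwartz (∑ j ∈ range m, (m : ℝ)⁻¹ • T ^ j) :=
    sum_smul_mem_of_convex convex_setOf_isDunfordSchwartz .zero (fun _ _ => by positivity)
      (by simpa using mul_inv_le_one) fun j _ => hT.pow j
  convert haverage.ae_le_one f hf hf_le using 4
  simp only [birkhoffAverage, birkhoffSum, id, smul_sum, FunLike.coe_pow_eq_iterate,
    _root_.sum_apply, _root_.smul_apply]

end IsDunfordSchwartz

theorem partialSups_birkhoffSum_le {G : Type*} [Lattice G] [AddCommGroup G] [AddLeftMono G]
    {F : Type*} [FunLike F G G] [AddMonoidHomClass F G G] {U : F} (hU : Monotone U) (f : G)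
    (n : ℕ) :
    partialSups (fun m => birkhoffSum U id m f) n ≤
      (f + U (partialSups (fun m => birkhoffSum U id m f) n)) ⊔ 0 := by
  refine partialSups_le _ _ _ fun m hm => ?_
  cases m with
  | zero => exact le_sup_right
  | succ m =>
    have hshift : birkhoffSum U id m (U f) = U (birkhoffSum U id m f) := by
      simp only [birkhoffSum, map_sum, id, ← Function.iterate_succ_apply,
        Function.iterate_succ_apply']
    rw [birkhoffSum_succ', id, hshift]
    refine le_sup_of_le_left (add_le_add_right (hU ?_) f)
    exact le_partialSups_of_le (fun m => birkhoffSum U id m f) (Nat.le_of_succ_le hm)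

theorem integral_coeFn_eq_norm {f : Lp ℝ 1 μ} (hf : 0 ≤ f) : ∫ x, f x ∂μ = ‖f‖ := by
  rw [L1.norm_eq_integral_norm]
  refine integral_congr_ae ?_
  filter_upwards [(Lp.coeFn_nonneg f).mpr hf] with x hx
  exact (Real.norm_of_nonneg hx).symm

theorem measurableSet_lt_coeFn {p : ℝ≥0∞} (f : Lp ℝ p μ) (c : ℝ) : MeasurableSet {x | c < f x} :=
  measurableSet_lt measurable_const (Lp.stronglyMeasurable f).measurable

-- Garsia: on `{0 < h}` the assumption reads `h ≤ f + U h`, while off it `h - U h ≤ 0`, and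
-- `∫ (h - U h)` is nonnegative since `U` is a contraction.
theorem setIntegral_pos_nonneg_of_le_sup {U : Lp ℝ 1 μ →L[ℝ] Lp ℝ 1 μ} (hnorm : ‖U‖ ≤ 1)
    (hpos : ∀ f : Lp ℝ 1 μ, 0 ≤ f → 0 ≤ U f) {f h : Lp ℝ 1 μ} (hh : 0 ≤ h)
    (hle : h ≤ (f + U h) ⊔ 0) : 0 ≤ ∫ x in {x | 0 < h x}, f x ∂μ := by
  have hH := measurableSet_lt_coeFn h 0
  have hf_int := L1.integrable_coeFn f
  have hh_int := L1.integrable_coeFn h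
  have hUh_int := L1.integrable_coeFn (U h)
  have hindicator : ∀ᵐ x ∂μ, h x - U h x ≤ {x | 0 < h x}.indicator f x := by
    filter_upwards [(Lp.coeFn_le _ _).mpr hle, Lp.coeFn_sup (f + U h) 0, Lp.coeFn_add f (U h),
      Lp.coeFn_zero ℝ 1 μ, (Lp.coeFn_nonneg h).mpr hh, (Lp.coeFn_nonneg _).mpr (hpos h hh)]
      with x hle_x hsup hadd hzero hh_x hUh_x
    rw [hsup, Pi.sup_apply, hadd, Pi.add_apply, hzero] at hle_x
    simp only [Pi.zero_apply] at hh_x hUh_x hle_x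
    by_cases hx : x ∈ {x | 0 < h x}
    · rw [Set.indicator_of_mem hx]
      linarith [(le_sup_iff.mp hle_x).resolve_right (not_le_of_gt hx)]
    · have hh_nonpos : h x ≤ 0 := not_lt.mp hx
      rw [Set.indicator_of_notMem hx]
      linarith
  calc 0 ≤ ‖h‖ - ‖U h‖ := sub_nonneg.mpr (U.le_of_opNorm_le hnorm h |>.trans_eq (one_mul _))
    _ = ∫ x, (h x - U h x) ∂μ := by
      rw [integral_sub hh_int hUh_int, integral_coeFn_eq_norm hh,
        integral_coeFn_eq_norm (hpos h hh)]
    _ ≤ ∫ x, {x | 0 < h x}.indicator f x ∂μ :=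
      integral_mono_ae (hh_int.sub hUh_int) (hf_int.indicator hH) hindicator
    _ = ∫ x in {x | 0 < h x}, f x ∂μ := integral_indicator hH

theorem hopf_maximal_ergodic_inequality {U : Lp ℝ 1 μ →L[ℝ] Lp ℝ 1 μ} (hnorm : ‖U‖ ≤ 1)
    (hpos : ∀ f : Lp ℝ 1 μ, 0 ≤ f → 0 ≤ U f) (f : Lp ℝ 1 μ) (n : ℕ) :
    0 ≤ ∫ x in {x | 0 < partialSups (fun m => birkhoffSum U id m f) n x}, f x ∂μ := by
  refine setIntegral_pos_nonneg_of_le_sup hnorm hpos ?_ (partialSups_birkhoffSum_le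
    ((monotone_iff_map_nonneg U).mpr hpos) f n)
  simpa using le_partialSups_of_le (fun m => birkhoffSum U id m f) n.zero_le

theorem mul_measureReal_le_norm_of_setIntegral_nonneg {f : Lp ℝ 1 μ} (hf : 0 ≤ f) {l : ℝ}
    {F H : Set X} (hF : MeasurableSet F) (hF_fin : μ F ≠ ∞) (hH : MeasurableSet H)
    (hFH : F ≤ᵐ[μ] H)
    (hint : 0 ≤ ∫ x in H, (f - l • indicatorConstLp 1 hF hF_fin (1 : ℝ) : Lp ℝ 1 μ) x ∂μ) :
    l * μ.real F ≤ ‖f‖ := by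
  set χ : Lp ℝ 1 μ := indicatorConstLp 1 hF hF_fin (1 : ℝ)
  have hχ_int : ∫ x in H, χ x ∂μ = μ.real F := by
    have hinter : (F ∩ H : Set X) =ᵐ[μ] F := by
      filter_upwards [hFH] with x hx
      exact propext (and_iff_left_of_imp hx)
    rw [setIntegral_indicatorConstLp hH hF hF_fin, smul_eq_mul, mul_one,
      measureReal_congr hinter]
  have hsub : ∫ x in H, (f - l • χ : Lp ℝ 1 μ) x ∂μ = ∫ x in H, f x ∂μ - l * μ.real F := by
    rw [← hχ_int, ← integral_const_mul, ← integral_sub (L1.integrable_coeFn f).integrableOn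
      ((L1.integrable_coeFn χ).const_mul l).integrableOn]
    refine integral_congr_ae (ae_restrict_of_ae ?_)
    filter_upwards [Lp.coeFn_sub f (l • χ), Lp.coeFn_smul l χ] with x hx hlx
    rw [hx, Pi.sub_apply, hlx, Pi.smul_apply, smul_eq_mul]
  have hf_int : ∫ x in H, f x ∂μ ≤ ‖f‖ := by
    rw [← integral_coeFn_eq_norm hf]
    exact setIntegral_le_integral (L1.integrable_coeFn f) ((Lp.coeFn_nonneg f).mpr hf)
  linarith

namespace IsDunfordSchwartz

variable {U : Lp ℝ 1 μ →L[ℝ] Lp ℝ 1 μ}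

theorem birkhoffAverage_sub_le_ae (hU : IsDunfordSchwartz U) {f χ : Lp ℝ 1 μ} (hχ : 0 ≤ χ)
    (hχ_le : ∀ᵐ x ∂μ, χ x ≤ 1) {l : ℝ} (hl : 0 ≤ l) (m : ℕ) :
    ∀ᵐ x ∂μ, birkhoffAverage ℝ U id m f x - l ≤ birkhoffAverage ℝ U id m (f - l • χ) x := by
  have hlinear : birkhoffAverage ℝ U id m (f - l • χ) =
      birkhoffAverage ℝ U id m f - l • birkhoffAverage ℝ U id m χ := by
    simp only [birkhoffAverage, birkhoffSum, id, ← FunLike.coe_pow_eq_iterate, map_sub, map_smul,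
      sum_sub_distrib, smul_sub, ← smul_sum, smul_comm l]
  rw [hlinear]
  filter_upwards [hU.birkhoffAverage_ae_le_one hχ hχ_le m,
    Lp.coeFn_smul l (birkhoffAverage ℝ U id m χ),
    Lp.coeFn_sub (birkhoffAverage ℝ U id m f) (l • birkhoffAverage ℝ U id m χ)]
    with x hle hsmul hsub
  rw [hsub, Pi.sub_apply, hsmul, Pi.smul_apply, smul_eq_mul]
  linarith [mul_le_of_le_one_right hl hle]

end IsDunfordSchwartz

theorem birkhoffSum_pos_of_birkhoffAverage_pos_ae {p : ℝ≥0∞}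
    (U : Lp ℝ p μ → Lp ℝ p μ) (f : Lp ℝ p μ) (m : ℕ) :
    ∀ᵐ x ∂μ, 0 < birkhoffAverage ℝ U id m f x → 0 < birkhoffSum U id m f x := by
  filter_upwards [Lp.coeFn_smul (m : ℝ)⁻¹ (birkhoffSum U id m f)] with x hx hpos
  rw [birkhoffAverage, hx, Pi.smul_apply, smul_eq_mul] at hpos
  exact pos_of_mul_pos_right hpos (by positivity)

/-- The points where one of the ergodic averages `m⁻¹ ∑ Uʲ f` with `m ≤ M` exceeds `l`. -/
def maximalSet (U : Lp ℝ 1 μ → Lp ℝ 1 μ) (f : Lp ℝ 1 μ) (l : ℝ) (M : ℕ) : Set X :=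
  Set.accumulate (fun m => {x | l < birkhoffAverage ℝ U id m f x}) M

theorem measurableSet_maximalSet (U : Lp ℝ 1 μ → Lp ℝ 1 μ) (f : Lp ℝ 1 μ) (l : ℝ) (M : ℕ) :
    MeasurableSet (maximalSet U f l M) :=
  .biUnion (Set.to_countable _) fun _ _ => measurableSet_lt_coeFn _ _

theorem measure_maximalSet_ne_top (U : Lp ℝ 1 μ → Lp ℝ 1 μ) (f : Lp ℝ 1 μ) {l : ℝ} (hl : 0 < l)
    (M : ℕ) : μ (maximalSet U f l M) ≠ ∞ :=
  (measure_biUnion_lt_top (Set.finite_Iic M) fun _ _ =>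
    (L1.integrable_coeFn _).measure_gt_lt_top hl).ne

namespace IsDunfordSchwartz

variable {U : Lp ℝ 1 μ →L[ℝ] Lp ℝ 1 μ}

theorem mul_measureReal_maximalSet_le (hU : IsDunfordSchwartz U) {f : Lp ℝ 1 μ} (hf : 0 ≤ f)
    {l : ℝ} (hl : 0 < l) (M : ℕ) :
    l * μ.real (maximalSet U f l M) ≤ ‖f‖ := by
  have hF := measurableSet_maximalSet U f l M
  have hF_fin := measure_maximalSet_ne_top U f hl M
  set χ : Lp ℝ 1 μ := indicatorConstLp 1 hF hF_fin (1 : ℝ)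
  have hχ : ∀ᵐ x ∂μ, 0 ≤ χ x ∧ χ x ≤ 1 := by
    filter_upwards [indicatorConstLp_coeFn (p := 1) (hs := hF) (hμs := hF_fin) (c := (1 : ℝ))]
      with x hx
    rw [hx]
    exact ⟨Set.indicator_nonneg (fun _ _ => zero_le_one) x,
      Set.indicator_le_self' (fun _ _ => zero_le_one) x⟩
  have hχ_nonneg : 0 ≤ χ := (Lp.coeFn_nonneg χ).mp (hχ.mono fun _ h => h.1)
  set g := f - l • χ
  set h := partialSups (fun m => birkhoffSum U id m g) M
  have hsubset : maximalSet U f l M ≤ᵐ[μ] {x | 0 < h x} := by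
    have hsums (m : ℕ) : ∀ᵐ x ∂μ, m ≤ M → birkhoffSum U id m g x ≤ h x :=
      Filter.eventually_imp_distrib_left.mpr fun hm =>
        (Lp.coeFn_le _ _).mpr (le_partialSups_of_le (fun m => birkhoffSum U id m g) hm)
    filter_upwards [ae_all_iff.mpr (birkhoffSum_pos_of_birkhoffAverage_pos_ae U g),
      ae_all_iff.mpr (hU.birkhoffAverage_sub_le_ae hχ_nonneg (hχ.mono fun _ h => h.2) hl.le),
      ae_all_iff.mpr hsums] with x hpos haverage hsup hx
    obtain ⟨m, hm, hlt⟩ := Set.mem_accumulate.mp hx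
    exact (hpos m ((sub_pos.mpr hlt).trans_le (haverage m))).trans_le (hsup m hm)
  exact mul_measureReal_le_norm_of_setIntegral_nonneg hf hF hF_fin (measurableSet_lt_coeFn h 0)
    hsubset (hopf_maximal_ergodic_inequality hU.norm_le_one hU.nonneg g M)

theorem measure_exists_lt_birkhoffAverage_le (hU : IsDunfordSchwartz U) {f : Lp ℝ 1 μ}
    (hf : 0 ≤ f) {l : ℝ} (hl : 0 < l) :
    μ (⋃ m, {x | l < birkhoffAverage ℝ U id m f x}) ≤ ENNReal.ofReal (l⁻¹ * ‖f‖) := by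
  rw [measure_iUnion_eq_iSup_accumulate]
  refine iSup_le fun M => ?_
  change μ (maximalSet U f l M) ≤ ENNReal.ofReal (l⁻¹ * ‖f‖)
  rw [← ENNReal.ofReal_toReal (measure_maximalSet_ne_top U f hl M)]
  refine ENNReal.ofReal_le_ofReal ?_
  rw [inv_mul_eq_div, le_div_iff₀' hl]
  exact hU.mul_measureReal_maximalSet_le hf hl M

end IsDunfordSchwartz

theorem maximal_inequality_two_kernels_general {T₁ T₂ : Lp ℝ 1 μ →L[ℝ] Lp ℝ 1 μ}
    (hcomm : Commute T₁ T₂) (h₁ : IsDunfordSchwartz T₁) (h₂ : IsDunfordSchwartz T₂)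
    {x : Lp ℝ 1 μ} (hx : 0 ≤ x) {ε : ℝ} (hε : 0 < ε) :
    ∃ E : Set X, MeasurableSet E ∧ μ Eᶜ ≤ ENNReal.ofReal (ε⁻¹ * ‖x‖) ∧
      ∀ n : ℕ, 0 < n → ∀ᵐ ω ∂μ, ω ∈ E → |squareAverage T₁ T₂ n x ω| ≤ brunelConst * ε := by
  set U := brunelOperator T₁ T₂
  refine ⟨(⋃ m, {ω | ε < birkhoffAverage ℝ U id m x ω})ᶜ,
    (MeasurableSet.iUnion fun m => measurableSet_lt_coeFn _ ε).compl, ?_, fun n _ => ?_⟩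
  · rw [compl_compl]
    exact (h₁.brunelOperator h₂).measure_exists_lt_birkhoffAverage_le hx hε
  set m := Nat.sqrt n + 1
  have hbrunel : squareAverage T₁ T₂ n x ≤ brunelConst • birkhoffAverage ℝ U id m x :=
    squareAverage_le_smul_birkhoffAverage_brunelOperator hcomm h₁.norm_le_one h₂.norm_le_one
      h₁.monotone h₂.monotone hx n
  filter_upwards [(Lp.coeFn_le _ _).mpr hbrunel,
    Lp.coeFn_smul brunelConst (birkhoffAverage ℝ U id m x),
    (Lp.coeFn_nonneg _).mpr (squareAverage_nonneg h₁.monotone h₂.monotone hx n)]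
    with ω hle hsmul hnonneg hω
  have haverage : birkhoffAverage ℝ U id m x ω ≤ ε :=
    not_lt.mp fun hlt => hω (Set.mem_iUnion.mpr ⟨m, hlt⟩)
  rw [hsmul, Pi.smul_apply, smul_eq_mul] at hle
  rw [abs_of_nonneg hnonneg]
  exact hle.trans (mul_le_mul_of_nonneg_left haverage brunelConst_pos.le)

end DunfordSchwartz

/-- Maximal inequality for two commuting kernels (commutative model): if
`T₁, T₂` are commuting positive `L¹`-contractions which are also `L∞`
contractions, `0 ≤ x ∈ L¹`, `ε > 0`, then there is a set `E` with
`μ Eᶜ ≤ 2 ε⁻¹ ‖x‖₁` on which all square averages are uniformly bounded by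
`2 χ₂ ε`, where `χ₂` is the Brunel constant for `d = 2`. -/
theorem maximal_inequality_two_kernels {X : Type*} [MeasurableSpace X]
    (μ : Measure X) [SigmaFinite μ]
    (T₁ T₂ : Lp ℝ 1 μ →L[ℝ] Lp ℝ 1 μ)
    (hcomm : T₁ * T₂ = T₂ * T₁)
    (hnorm₁ : ‖T₁‖ ≤ 1) (hnorm₂ : ‖T₂‖ ≤ 1)
    (hpos₁ : ∀ f : Lp ℝ 1 μ, 0 ≤ f → 0 ≤ T₁ f)
    (hpos₂ : ∀ f : Lp ℝ 1 μ, 0 ≤ f → 0 ≤ T₂ f)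
    (hinfty₁ : ∀ f : Lp ℝ 1 μ, 0 ≤ f → (∀ᵐ x ∂μ, f x ≤ 1) →
      ∀ᵐ x ∂μ, T₁ f x ≤ 1)
    (hinfty₂ : ∀ f : Lp ℝ 1 μ, 0 ≤ f → (∀ᵐ x ∂μ, f x ≤ 1) →
      ∀ᵐ x ∂μ, T₂ f x ≤ 1) :
    ∃ χ : ℝ, 0 < χ ∧ ∀ x : Lp ℝ 1 μ, 0 ≤ x → ∀ ε > (0 : ℝ),
      ∃ E : Set X, MeasurableSet E ∧
        μ Eᶜ ≤ ENNReal.ofReal (2 * ε⁻¹ * ‖x‖) ∧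
        ∀ n : ℕ, 0 < n → ∀ᵐ ω ∂μ, ω ∈ E →
          |((((n : ℝ) ^ 2)⁻¹ • ∑ k ∈ range n ×ˢ range n,
              ((T₁ ^ k.1) * (T₂ ^ k.2)) x : Lp ℝ 1 μ) : X → ℝ) ω| ≤ 2 * χ * ε := by
  refine ⟨brunelConst / 4, div_pos brunelConst_pos four_pos, fun x hx ε hε => ?_⟩
  rw [show 2 * (brunelConst / 4) * ε = brunelConst * (ε / 2) by ring, ← div_eq_mul_inv, ← inv_div]
  exact maximal_inequality_two_kernels_general hcomm ⟨hnorm₁, hpos₁, hinfty₁⟩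
    ⟨hnorm₂, hpos₂, hinfty₂⟩ hx (half_pos hε)
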